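/- (Monotonicity Lemma) Let a < b be real numbers and let f : [a, b] → ℝ be a semialgebraic function. Then there is a partition a =: t₁ < t₂ < ⋯ < t_N := b of [a, b] such that, for each l ∈ {1, …, N − 1}, the restriction of f to the open interval (t_l, t_{l+1}) is C¹ and is either constant or strictly monotone. -/

import Mathlib

open MvPolynomial Set Filter
open scoped Classical

noncomputable section

/-- The exponent vector of a monomial, viewed as a point of `ℝⁿ`. -/
def expVec {n : ℕ} (κ : Fin n →₀ ℕ) : Fin n → ℝ := fun j => (κ j : ℝ)

/-- The Newton polyhedron at infinity `Γ(f)`: the convex hull of the support of `f`. -/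
def NewtonPolyhedron {n : ℕ} (f : MvPolynomial (Fin n) ℝ) : Set (Fin n → ℝ) :=
  convexHull ℝ (expVec '' (f.support : Set (Fin n →₀ ℕ)))

/-- `d(q, Γ(f)) := min {⟨q, κ⟩ : κ ∈ Γ(f)}`. -/
def NewtonD {n : ℕ} (f : MvPolynomial (Fin n) ℝ) (q : Fin n → ℝ) : ℝ :=
  sInf ((fun κ : Fin n → ℝ => ∑ j, q j * κ j) '' NewtonPolyhedron f)

/-- `Δ(q, Γ(f)) := {κ ∈ Γ(f) : ⟨q, κ⟩ = d(q, Γ(f))}`. -/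
def NewtonFace {n : ℕ} (f : MvPolynomial (Fin n) ℝ) (q : Fin n → ℝ) : Set (Fin n → ℝ) :=
  {κ ∈ NewtonPolyhedron f | ∑ j, q j * κ j = NewtonD f q}

/-- For a set `Δ ⊆ ℝⁿ`, the polynomial `f_Δ := ∑_{κ ∈ Δ} a_κ x^κ`. -/
def facePoly {n : ℕ} (f : MvPolynomial (Fin n) ℝ) (Δ : Set (Fin n → ℝ)) :
    MvPolynomial (Fin n) ℝ :=
  ∑ κ ∈ f.support.filter (fun κ => expVec κ ∈ Δ), monomial κ (f.coeff κ)

/-- `ℝ^J := {x ∈ ℝⁿ : x_j = 0 for all j ∉ J}`. -/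
def RJ {n : ℕ} (J : Set (Fin n)) : Set (Fin n → ℝ) := {x | ∀ j ∉ J, x j = 0}

/-- The restriction of `f` to `ℝ^J` is not constant. -/
def NotConstOn {n : ℕ} (f : MvPolynomial (Fin n) ℝ) (J : Set (Fin n)) : Prop :=
  ∃ x ∈ RJ J, ∃ y ∈ RJ J, eval x f ≠ eval y f

/-- The Mangasarian–Fromovitz property at infinity for `inf {f 0 x : f i x ≤ 0, i = 1,…,p}`. -/
def MFinfty {n p : ℕ} (f : Fin (p + 1) → MvPolynomial (Fin n) ℝ) : Prop :=
  ∀ J : Set (Fin n), J.Nonempty → ∀ q x : Fin n → ℝ,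
    NewtonD (f 0) q < 0 →
    (∀ i, NotConstOn (f i) J → NewtonFace (f i) q ⊆ RJ J) →
    (∀ j, x j = 0 ↔ j ∉ J) →
    (∀ i, i ≠ 0 → eval x (facePoly (f i) (NewtonFace (f i) q)) ≤ 0) →
    ∃ v : Fin n → ℝ, v ≠ 0 ∧ ∀ i, NotConstOn (f i) J →
      eval x (facePoly (f i) (NewtonFace (f i) q)) = 0 →
      ∑ j, eval x (pderiv j (facePoly (f i) (NewtonFace (f i) q))) * v j < 0

/-- Kouchnirenko non-degeneracy at infinity. -/
def NondegenerateAtInfinity {n : ℕ} (f : MvPolynomial (Fin n) ℝ) : Prop :=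
  ∀ q : Fin n → ℝ, NewtonD f q < 0 →
    ∀ x : Fin n → ℝ, (∀ j, x j ≠ 0) →
      ¬ ∀ j, eval x (pderiv j (facePoly f (NewtonFace f q))) = 0

/-- A convenient polynomial. -/
def Convenient {n : ℕ} (f : MvPolynomial (Fin n) ℝ) : Prop :=
  ∀ j : Fin n, ∃ c : ℝ, 0 < c ∧ c • (Pi.single j 1 : Fin n → ℝ) ∈ NewtonPolyhedron f

/-- A bad face of `Γ(f)`. -/
def BadFace {n : ℕ} (f : MvPolynomial (Fin n) ℝ) (Δ : Set (Fin n → ℝ)) : Prop :=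
  (∃ q : Fin n → ℝ, Δ = NewtonFace f q) ∧
  (0 : Fin n → ℝ) ∈ affineSpan ℝ Δ ∧
  ∃ q : Fin n → ℝ, (∃ i j, q i * q j < 0) ∧
    {κ : Fin n → ℝ | ∑ j, q j * κ j = 0} ∩ NewtonPolyhedron f = Δ

/-- The set of critical values of `f`. -/
def K0 {n : ℕ} (f : MvPolynomial (Fin n) ℝ) : Set ℝ :=
  {c | ∃ x : Fin n → ℝ, (∀ j, eval x (pderiv j f) = 0) ∧ eval x f = c}

/-- `Σ∞(f)`: critical values of `f_Δ` over all bad faces `Δ`. -/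
def SigmaInfty {n : ℕ} (f : MvPolynomial (Fin n) ℝ) : Set ℝ :=
  {c | ∃ Δ : Set (Fin n → ℝ), BadFace f Δ ∧ ∃ x : Fin n → ℝ,
    (∀ j, eval x (pderiv j (facePoly f Δ)) = 0) ∧ eval x (facePoly f Δ) = c}

/-- `Σ∞'(f)`: critical values of `f_Δ` on `(ℝ ∖ {0})ⁿ` over all bad faces `Δ`. -/
def SigmaInfty' {n : ℕ} (f : MvPolynomial (Fin n) ℝ) : Set ℝ :=
  {c | ∃ Δ : Set (Fin n → ℝ), BadFace f Δ ∧ ∃ x : Fin n → ℝ, (∀ j, x j ≠ 0) ∧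
    (∀ j, eval x (pderiv j (facePoly f Δ)) = 0) ∧ eval x (facePoly f Δ) = c}

/-- The Euclidean norm on `Fin k → ℝ`. -/
def euclNorm {k : ℕ} (x : Fin k → ℝ) : ℝ := Real.sqrt (∑ j, (x j) ^ 2)

/-- Basic semialgebraic subsets of `ℝ^m`. -/
def BasicSA {m : ℕ} (A : Set (Fin m → ℝ)) : Prop :=
  ∃ (k l : ℕ) (g : Fin k → MvPolynomial (Fin m) ℝ) (h : Fin l → MvPolynomial (Fin m) ℝ),
    A = {x | (∀ i, eval x (g i) = 0) ∧ ∀ i, 0 < eval x (h i)}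

/-- Semialgebraic subsets of `ℝ^m`: finite unions of basic semialgebraic sets. -/
def IsSA {m : ℕ} (A : Set (Fin m → ℝ)) : Prop :=
  ∃ (N : ℕ) (B : Fin N → Set (Fin m → ℝ)), (∀ i, BasicSA (B i)) ∧ A = ⋃ i, B i

/-- A semialgebraic scalar function on a domain `D ⊆ ℝ` (graph is semialgebraic). -/
def IsSAFunOn (D : Set ℝ) (f : ℝ → ℝ) : Prop :=
  IsSA {z : Fin 2 → ℝ | z 0 ∈ D ∧ z 1 = f (z 0)}

/-- A semialgebraic curve `D → ℝⁿ` (graph is semialgebraic). -/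
def IsSACurve {n : ℕ} (D : Set ℝ) (φ : ℝ → Fin n → ℝ) : Prop :=
  IsSA {z : Fin (n + 1) → ℝ | z 0 ∈ D ∧ ∀ j : Fin n, z j.succ = φ (z 0) j}

/-- A semialgebraic map `ℝⁿ → ℝ^p` (graph is semialgebraic). -/
def IsSAMap {n p : ℕ} (F : (Fin n → ℝ) → (Fin p → ℝ)) : Prop :=
  IsSA {z : Fin (n + p) → ℝ |
    (fun i : Fin p => z (Fin.natAdd n i)) = F (fun j : Fin n => z (Fin.castAdd p j))}

/- A piece `{g = 0, h > 0}` of the graph of `f` is empty unless one of its equations `g` is a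
nonzero polynomial, for otherwise it is open. So the graph lies on finitely many curves `p = 0` with
`p` irreducible. By elimination, a polynomial not divisible by `p` has common zeros with `p` above
only finitely many abscissae. Applied to `∂p/∂y`, this lets the implicit function theorem
parametrise the curve analytically; applied to the `g`, it shows that the parametrisation stays in
the piece, hence is `f`; applied to `∂p/∂x`, it shows that `f' = -(∂p/∂x) / (∂p/∂y)` either vanishes
identically or has finitely many zeros. -/

open Polynomial.Bivariate (equivMvPolynomial pderiv_one_equivMvPolynomial)
open scoped Topology Polynomial ContDiff

section Elimination

theorem exists_mul_add_mul_eq_C_of_irreducible {R : Type*} [CommRing R] [IsDomain R]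
    [IsGCDMonoid R] {p q : R[X]} (hp : Irreducible p) (hpq : ¬p ∣ q) :
    ∃ (d : R) (u v : R[X]), d ≠ 0 ∧ u * p + v * q = Polynomial.C d := by
  by_cases hdeg : p.natDegree = 0
  · obtain ⟨c, rfl⟩ := Polynomial.natDegree_eq_zero.1 hdeg
    exact ⟨c, 1, 0, fun hc => hp.ne_zero (by simp [hc]), by simp⟩
  let φ := algebraMap R (FractionRing R)
  have hφ : Function.Injective φ := IsFractionRing.injective R _
  have hprim : p.IsPrimitive := hp.isPrimitive hdeg
  have hcoprime : IsCoprime (p.map φ) (q.map φ) :=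
    (hprim.irreducible_iff_irreducible_map_fraction_map.1 hp).coprime_iff_not_dvd.2
      fun h => hpq (hprim.dvd_of_fraction_map_dvd_fraction_map h)
  have hres : p.resultant q ≠ 0 := by
    intro h
    apply Polynomial.resultant_ne_zero _ _ hcoprime
    rw [Polynomial.resultant_map_map, Polynomial.natDegree_map_eq_of_injective hφ,
      Polynomial.natDegree_map_eq_of_injective hφ, h, map_zero]
  obtain ⟨u, v, -, -, huv⟩ :=
    p.exists_mul_add_mul_eq_C_resultant q le_rfl le_rfl (Or.inl hdeg)
  exact ⟨_, u, v, hres, by rw [← huv, mul_comm u, mul_comm v]⟩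

theorem eventually_cofinite_eval_ne_zero {R : Type*} [CommRing R] [IsDomain R] {p : R[X]}
    (hp : p ≠ 0) : ∀ᶠ x in cofinite, p.eval x ≠ 0 := by
  simpa [eventually_cofinite] using Polynomial.finite_setOfPred_isRoot hp

theorem eval_equivMvPolynomial {R : Type*} [CommRing R] (p : R[X][X]) (x y : R) :
    eval ![x, y] (equivMvPolynomial R p) = p.evalEval x y := by
  have h : (eval ![x, y]).comp (equivMvPolynomial R : R[X][X] →+* MvPolynomial (Fin 2) R) =
      Polynomial.evalEvalRingHom x y := by
    ext <;> simp
  exact DFunLike.congr_fun h p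

variable {K : Type*} [Field K] {p : MvPolynomial (Fin 2) K}

theorem eventually_cofinite_dvd_of_eval_eq_zero (hp : Irreducible p)
    (q : MvPolynomial (Fin 2) K) :
    ∀ᶠ x in cofinite, ∀ y, eval ![x, y] p = 0 → eval ![x, y] q = 0 → p ∣ q := by
  obtain ⟨p, rfl⟩ := (equivMvPolynomial K).surjective p
  obtain ⟨q, rfl⟩ := (equivMvPolynomial K).surjective q
  rw [MulEquiv.irreducible_iff] at hp
  simp only [eval_equivMvPolynomial, map_dvd_iff]
  by_cases hpq : p ∣ q
  · exact .of_forall fun _ _ _ _ => hpq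
  obtain ⟨d, u, v, hd, huv⟩ := exists_mul_add_mul_eq_C_of_irreducible hp hpq
  filter_upwards [eventually_cofinite_eval_ne_zero hd] with x hx y hpx hqx
  refine absurd ?_ hx
  rw [← Polynomial.evalEval_C x y, ← huv, Polynomial.evalEval_add, Polynomial.evalEval_mul,
    Polynomial.evalEval_mul, hpx, hqx, mul_zero, mul_zero, add_zero]

theorem eventually_cofinite_eval_pderiv_one_ne_zero [CharZero K] (hp : Irreducible p) :
    ∀ᶠ x in cofinite, ∀ y, eval ![x, y] p = 0 → eval ![x, y] (pderiv 1 p) ≠ 0 := by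
  have hdvd := eventually_cofinite_dvd_of_eval_eq_zero hp (pderiv 1 p)
  obtain ⟨p, rfl⟩ := (equivMvPolynomial K).surjective p
  simp only [pderiv_one_equivMvPolynomial, eval_equivMvPolynomial,
    map_dvd_iff] at hdvd ⊢
  by_cases hdeg : p.natDegree = 0
  · obtain ⟨c, rfl⟩ := Polynomial.natDegree_eq_zero.1 hdeg
    have hc : c ≠ 0 := by rintro rfl; exact hp.ne_zero (by simp)
    filter_upwards [eventually_cofinite_eval_ne_zero hc] with x hx y hy
    exact absurd (by rwa [Polynomial.evalEval_C] at hy) hx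
  · filter_upwards [hdvd] with x hx y hy hy'
    exact hdeg <| Polynomial.derivative_eq_zero.1 <|
      Polynomial.eq_zero_of_dvd_of_natDegree_lt (hx y hy hy')
        (Polynomial.natDegree_derivative_lt hdeg)

theorem exists_mem_factors_map_eq_zero {R S : Type*} [CommRing R] [IsDomain R]
    [UniqueFactorizationMonoid R] [CommRing S] [IsDomain S] (φ : R →+* S) {q : R} (hq : q ≠ 0)
    (h : φ q = 0) : ∃ p ∈ UniqueFactorizationMonoid.factors q, φ p = 0 := by
  have hprod : φ (UniqueFactorizationMonoid.factors q).prod = 0 :=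
    zero_dvd_iff.1 (h ▸ map_dvd φ (UniqueFactorizationMonoid.factors_prod hq).symm.dvd)
  simpa only [map_multiset_prod, Multiset.prod_eq_zero_iff, Multiset.mem_map] using hprod

end Elimination

section Calculus

theorem continuousAt_graph {X : Type*} [TopologicalSpace X] {f : X → X} {x : X}
    (hf : ContinuousAt f x) : ContinuousAt (fun t => ![t, f t]) x :=
  continuousAt_id.matrixVecCons (hf.matrixVecCons continuousAt_const)

theorem hasFDerivAt_eval {𝕜 σ : Type*} [NontriviallyNormedField 𝕜] [Fintype σ]
    (p : MvPolynomial σ 𝕜) (z : σ → 𝕜) :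
    HasFDerivAt (fun w : σ → 𝕜 => eval w p)
      (∑ i, eval z (pderiv i p) • (ContinuousLinearMap.proj i : (σ → 𝕜) →L[𝕜] 𝕜)) z := by
  induction p using MvPolynomial.induction_on with
  | C c =>
    simp only [eval_C]
    exact (hasFDerivAt_const c z).congr_fderiv (by ext; simp)
  | add p q hp hq =>
    simp only [map_add]
    refine (hp.fun_add hq).congr_fderiv ?_
    ext
    simp [add_mul, Finset.sum_add_distrib]
  | mul_X p j hp =>
    have hX := (ContinuousLinearMap.proj (R := 𝕜) (φ := fun _ : σ => 𝕜) j).hasFDerivAt (x := z)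
    simp only [map_mul, eval_X]
    refine (hp.mul hX).congr_fderiv ?_
    ext v
    simp [pderiv_X, Pi.single_apply, Finset.mul_sum, add_mul, Finset.sum_add_distrib, mul_assoc,
      apply_ite (eval z)]

theorem hasDerivAt_eval_graph {𝕜 : Type*} [NontriviallyNormedField 𝕜] {f : 𝕜 → 𝕜} {x f' : 𝕜}
    (hf : HasDerivAt f f' x) (p : MvPolynomial (Fin 2) 𝕜) :
    HasDerivAt (fun t => eval ![t, f t] p)
      (eval ![x, f x] (pderiv 0 p) + eval ![x, f x] (pderiv 1 p) * f') x := by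
  have hgraph : HasDerivAt (fun t => ![t, f t]) ![1, f'] x := by
    rw [hasDerivAt_pi, Fin.forall_fin_two]
    exact ⟨hasDerivAt_id x, hf⟩
  simpa [Function.comp_def] using (hasFDerivAt_eval p ![x, f x]).comp_hasDerivAt x hgraph

theorem exists_analyticAt_eventually_eval_graph_eq_zero {𝕜 : Type*} [RCLike 𝕜]
    {p : MvPolynomial (Fin 2) 𝕜} {x₀ y₀ : 𝕜} (h₀ : eval ![x₀, y₀] p = 0)
    (h₁ : eval ![x₀, y₀] (pderiv 1 p) ≠ 0) :
    ∃ φ : 𝕜 → 𝕜, AnalyticAt 𝕜 φ x₀ ∧ φ x₀ = y₀ ∧ ∀ᶠ x in 𝓝 x₀, eval ![x, φ x] p = 0 := by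
  let L : Fin 2 → 𝕜 × 𝕜 →L[𝕜] 𝕜 := ![.fst 𝕜 𝕜 𝕜, .snd 𝕜 𝕜 𝕜]
  let F : 𝕜 × 𝕜 → 𝕜 := fun z => eval (L · z) p
  have hL : ∀ x y, (L · (x, y)) = ![x, y] := fun x y => by ext i; fin_cases i <;> rfl
  have hF : ContDiffAt 𝕜 ω F (x₀, y₀) :=
    (AnalyticOnNhd.eval_continuousLinearMap' L p _ (mem_univ _)).contDiffAt
  have hF' : fderiv 𝕜 F (x₀, y₀) ∘L .inr 𝕜 𝕜 𝕜 =
      ContinuousLinearEquiv.unitsEquivAut 𝕜 (Units.mk0 _ h₁) := by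
    have hFL : HasFDerivAt F _ (x₀, y₀) :=
      (hasFDerivAt_eval p _).comp (x₀, y₀) (ContinuousLinearMap.pi L).hasFDerivAt
    rw [hFL.fderiv]
    ext
    simp [L, hL]
  have hinv : (fderiv 𝕜 F (x₀, y₀) ∘L .inr 𝕜 𝕜 𝕜).IsInvertible := ⟨_, hF'.symm⟩
  have hω : (ω : WithTop ℕ∞) ≠ 0 := by simp
  refine ⟨hF.implicitFunction hω hinv, (hF.contDiffAt_implicitFunction hω hinv).analyticAt,
    hF.implicitFunction_apply_self hω hinv, ?_⟩
  filter_upwards [hF.eventually_apply_implicitFunction hω hinv] with x hx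
  simpa only [F, hL, h₀] using hx

theorem isOpen_setOfPred_forall_eval_pos {σ κ : Type*} [Finite κ]
    (h : κ → MvPolynomial σ ℝ) :
    IsOpen {z | ∀ i, 0 < eval z (h i)} := by
  simpa only [ofPred_forall] using
    isOpen_iInter_of_finite fun i => isOpen_lt continuous_const (continuous_eval (h i))

end Calculus

/-- `f` is tame at `x` if it is analytic there and its derivative either does not vanish at `x` or
vanishes identically near `x`. So `f` is, near `x`, constant or an analytic diffeomorphism. -/
def IsTameAt (f : ℝ → ℝ) (x : ℝ) : Prop :=
  AnalyticAt ℝ f x ∧ (deriv f x ≠ 0 ∨ ∀ᶠ t in 𝓝 x, deriv f t = 0)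

theorem IsTameAt.congr {f g : ℝ → ℝ} {x : ℝ} (hf : IsTameAt f x) (h : f =ᶠ[𝓝 x] g) :
    IsTameAt g x := by
  refine ⟨hf.1.congr h, hf.2.imp (fun hfx => h.deriv_eq ▸ hfx) fun hfx => ?_⟩
  filter_upwards [hfx, h.deriv] with t ht hgt
  exact hgt ▸ ht

theorem contDiffOn_of_forall_isTameAt {f : ℝ → ℝ} {s : Set ℝ} (hf : ∀ x ∈ s, IsTameAt f x)
    {n : WithTop ℕ∞} : ContDiffOn ℝ n f s :=
  fun x hx => (hf x hx).1.contDiffAt.contDiffWithinAt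

theorem const_or_strictMonoOn_or_strictAntiOn_of_forall_isTameAt {f : ℝ → ℝ} {s : Set ℝ}
    (hs : IsOpen s) (hs' : IsPreconnected s) (hf : ∀ x ∈ s, IsTameAt f x) :
    (∀ x ∈ s, ∀ y ∈ s, f x = f y) ∨ StrictMonoOn f s ∨ StrictAntiOn f s := by
  have hconv : Convex ℝ s := hs'.ordConnected.convex
  have hdiff : DifferentiableOn ℝ f s := fun x hx => (hf x hx).1.differentiableWithinAt
  by_cases hcrit : ∃ x ∈ s, deriv f x = 0
  · obtain ⟨x, hx, hfx⟩ := hcrit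
    have hderiv : AnalyticOnNhd ℝ (deriv f) s := fun y hy => (hf y hy).1.deriv
    have hzero : EqOn (deriv f) 0 s := hderiv.eqOn_zero_of_preconnected_of_eventuallyEq_zero hs' hx
      ((hf x hx).2.resolve_left (not_not.2 hfx))
    exact .inl fun y hy z hz => hs.is_const_of_deriv_eq_zero hs' hdiff hzero hy hz
  · push Not at hcrit
    rcases hasDerivWithinAt_forall_lt_or_forall_gt_of_forall_ne hconv
      (fun x hx => (hf x hx).1.differentiableAt.hasDerivAt.hasDerivWithinAt) hcrit with hneg | hpos
    · exact .inr (.inr (strictAntiOn_of_deriv_neg hconv hdiff.continuousOn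
        fun x hx => hneg x (interior_subset hx)))
    · exact .inr (.inl (strictMonoOn_of_deriv_pos hconv hdiff.continuousOn
        fun x hx => hpos x (interior_subset hx)))

theorem eventually_eval_eq_zero_of_dvd {R σ α : Type*} [CommSemiring R] {l : Filter α}
    {z : α → σ → R} {p q : MvPolynomial σ R} (hpq : p ∣ q) (hpz : ∀ᶠ t in l, eval (z t) p = 0) :
    ∀ᶠ t in l, eval (z t) q = 0 :=
  hpz.mono fun t ht => zero_dvd_iff.1 (ht ▸ map_dvd (eval (z t)) hpq)

theorem isTameAt_of_eventually_eval_eq_zero {p : MvPolynomial (Fin 2) ℝ} {f : ℝ → ℝ} {x : ℝ}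
    (hf : AnalyticAt ℝ f x) (hpf : ∀ᶠ t in 𝓝 x, eval ![t, f t] p = 0)
    (h₁ : eval ![x, f x] (pderiv 1 p) ≠ 0)
    (h₀ : eval ![x, f x] (pderiv 0 p) = 0 → p ∣ pderiv 0 p) : IsTameAt f x := by
  refine ⟨hf, or_iff_not_imp_left.2 fun hfx => ?_⟩
  have hchain : ∀ᶠ t in 𝓝 x,
      eval ![t, f t] (pderiv 0 p) + eval ![t, f t] (pderiv 1 p) * deriv f t = 0 := by
    filter_upwards [hpf.eventually_nhds, hf.eventually_analyticAt] with t hpt hft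
    exact ((hasDerivAt_eval_graph hft.differentiableAt.hasDerivAt p).congr_of_eventuallyEq
      (hpt.mono fun _ => Eq.symm)).unique (hasDerivAt_const t 0)
  have hx : eval ![x, f x] (pderiv 0 p) = 0 := by
    simpa [not_not.1 hfx] using hchain.self_of_nhds
  filter_upwards [hchain, eventually_eval_eq_zero_of_dvd (h₀ hx) hpf,
    ((continuous_eval _).continuousAt.comp
      (continuousAt_graph hf.continuousAt)).eventually_ne h₁] with t ht ht₀ ht₁
  rw [ht₀, zero_add] at ht
  exact (mul_eq_zero.1 ht).resolve_left ht₁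

section BasicPiece

variable {ι κ : Type*} [Finite κ] {g : ι → MvPolynomial (Fin 2) ℝ}
  {h : κ → MvPolynomial (Fin 2) ℝ}

theorem exists_ne_zero_of_forall_eq {x y₀ : ℝ}
    (hy : ∀ y, (∀ i, eval ![x, y] (g i) = 0) → (∀ i, 0 < eval ![x, y] (h i)) → y = y₀)
    (hh : ∀ i, 0 < eval ![x, y₀] (h i)) : ∃ i, g i ≠ 0 := by
  by_contra! hg
  have hline : Continuous fun t : ℝ => ![x, t] :=
    continuous_const.matrixVecCons (continuous_id.matrixVecCons continuous_const)
  have hpos : ∀ᶠ t in 𝓝 y₀, ∀ i, 0 < eval ![x, t] (h i) :=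
    hline.continuousAt.eventually ((isOpen_setOfPred_forall_eval_pos h).mem_nhds hh)
  obtain ⟨t, ht, hne⟩ := ((eventually_nhdsWithin_of_eventually_nhds hpos).and
    (eventually_mem_nhdsWithin (s := {y₀}ᶜ))).exists
  exact hne (hy t (by simp [hg]) ht)

theorem eventually_isTameAt_of_irreducible [Finite ι] {f : ℝ → ℝ}
    (hf : ∀ x y, (∀ i, eval ![x, y] (g i) = 0) → (∀ i, 0 < eval ![x, y] (h i)) → y = f x)
    {p : MvPolynomial (Fin 2) ℝ} (hp : Irreducible p) :
    ∀ᶠ x in cofinite, ∀ y, (∀ i, eval ![x, y] (g i) = 0) → (∀ i, 0 < eval ![x, y] (h i)) →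
      eval ![x, y] p = 0 → IsTameAt f x := by
  filter_upwards [eventually_cofinite_eval_pderiv_one_ne_zero hp,
    eventually_cofinite_dvd_of_eval_eq_zero hp (pderiv 0 p),
    eventually_all.2 fun i => eventually_cofinite_dvd_of_eval_eq_zero hp (g i)]
    with x hx₁ hx₀ hxg y hgy hhy hpy
  obtain ⟨φ, hφ, rfl, hpφ⟩ := exists_analyticAt_eventually_eval_graph_eq_zero hpy (hx₁ y hpy)
  have hgφ : ∀ᶠ t in 𝓝 x, ∀ i, eval ![t, φ t] (g i) = 0 :=
    eventually_all.2 fun i => eventually_eval_eq_zero_of_dvd (hxg i _ hpy (hgy i)) hpφ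
  have hfφ : φ =ᶠ[𝓝 x] f := by
    filter_upwards [hgφ, (continuousAt_graph hφ.continuousAt).eventually
      ((isOpen_setOfPred_forall_eval_pos h).mem_nhds hhy)] with t hgt hht
    exact hf t _ hgt hht
  exact (isTameAt_of_eventually_eval_eq_zero hφ hpφ (hx₁ _ hpy) (hx₀ _ hpy)).congr hfφ

end BasicPiece

theorem BasicSA.eventually_isTameAt {B : Set (Fin 2 → ℝ)} {f : ℝ → ℝ} (hB : BasicSA B)
    (hf : ∀ z ∈ B, z 1 = f (z 0)) : ∀ᶠ x in cofinite, ∀ y, ![x, y] ∈ B → IsTameAt f x := by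
  obtain ⟨k, l, g, h, rfl⟩ := hB
  have hf' : ∀ x y, (∀ i, eval ![x, y] (g i) = 0) → (∀ i, 0 < eval ![x, y] (h i)) → y = f x :=
    fun x y hg hh => hf ![x, y] ⟨hg, hh⟩
  by_cases hg : ∃ j, g j ≠ 0
  · obtain ⟨j, hj⟩ := hg
    have hfactors : ∀ᶠ x in cofinite, ∀ p ∈ (UniqueFactorizationMonoid.factors (g j)).toFinset,
        ∀ y, (∀ i, eval ![x, y] (g i) = 0) → (∀ i, 0 < eval ![x, y] (h i)) →
          eval ![x, y] p = 0 → IsTameAt f x :=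
      (eventually_all_finset _).2 fun p hp => eventually_isTameAt_of_irreducible hf' <|
        UniqueFactorizationMonoid.irreducible_of_factor p (Multiset.mem_toFinset.1 hp)
    filter_upwards [hfactors] with x hx y ⟨hgy, hhy⟩
    obtain ⟨p, hp, hpy⟩ := exists_mem_factors_map_eq_zero (eval ![x, y]) hj (hgy j)
    exact hx p (Multiset.mem_toFinset.2 hp) y hgy hhy hpy
  · refine .of_forall fun x y ⟨hgy, hhy⟩ => absurd ?_ hg
    obtain rfl := hf' x y hgy hhy
    exact exists_ne_zero_of_forall_eq (hf' x) hhy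

theorem IsSAFunOn.eventually_isTameAt {D : Set ℝ} {f : ℝ → ℝ} (hf : IsSAFunOn D f) :
    ∀ᶠ x in cofinite, x ∈ D → IsTameAt f x := by
  obtain ⟨N, B, hB, hgraph⟩ := hf
  have hpiece : ∀ i, ∀ᶠ x in cofinite, ∀ y, ![x, y] ∈ B i → IsTameAt f x := fun i =>
    (hB i).eventually_isTameAt fun z hz => (hgraph.superset (mem_iUnion_of_mem i hz)).2
  filter_upwards [eventually_all.2 hpiece] with x hx hxD
  obtain ⟨i, hi⟩ := mem_iUnion.1 ((Set.ext_iff.1 hgraph ![x, f x]).1 ⟨hxD, rfl⟩)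
  exact hx i _ hi

theorem exists_strictMono_fin_Ioo_subset_diff {α : Type*} [LinearOrder α] {s : Set α}
    (hs : s.Finite) {a b : α} (hab : a ≤ b) :
    ∃ (N : ℕ) (t : Fin (N + 1) → α), StrictMono t ∧ t 0 = a ∧ t (Fin.last N) = b ∧
      ∀ l : Fin N, Ioo (t l.castSucc) (t l.succ) ⊆ Ioo a b \ s := by
  let T : Finset α := insert a (insert b {x ∈ hs.toFinset | x ∈ Ioo a b})
  have haT : a ∈ T := Finset.mem_insert_self _ _
  have hbT : b ∈ T := Finset.mem_insert_of_mem (Finset.mem_insert_self _ _)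
  have hT : ∀ x ∈ T, x ∈ Icc a b := by
    simp only [T, Finset.mem_insert, Finset.mem_filter]
    rintro x (rfl | rfl | ⟨-, hx⟩)
    exacts [left_mem_Icc.2 hab, right_mem_Icc.2 hab, Ioo_subset_Icc_self hx]
  obtain ⟨N, hN⟩ := Nat.exists_eq_succ_of_ne_zero (Finset.card_ne_zero_of_mem haT)
  let t := T.orderEmbOfFin hN
  have ht : ∀ i, t i ∈ Icc a b := fun i => hT _ (T.orderEmbOfFin_mem hN i)
  have hrange : ∀ x ∈ T, ∃ i, t i = x := fun x hx =>
    (T.range_orderEmbOfFin hN).symm.subset hx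
  obtain ⟨i, hi⟩ := hrange a haT
  obtain ⟨j, hj⟩ := hrange b hbT
  refine ⟨N, t, t.strictMono, (hi ▸ t.monotone (Fin.zero_le i)).antisymm (ht 0).1,
    (ht _).2.antisymm (hj ▸ t.monotone (Fin.le_last j)), fun l x hx => ?_⟩
  have hxab : x ∈ Ioo a b := ⟨(ht _).1.trans_lt hx.1, hx.2.trans_le (ht _).2⟩
  refine ⟨hxab, fun hxs => ?_⟩
  obtain ⟨k, rfl⟩ := hrange x (by simp [T, hxs, hxab.1, hxab.2])
  exact (Fin.castSucc_lt_iff_succ_le.1 (t.lt_iff_lt.1 hx.1)).not_gt (t.lt_iff_lt.1 hx.2)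

/-- **Lemma 2.4 (Monotonicity Lemma).** -/
theorem monotonicity_lemma (a b : ℝ) (hab : a < b) (f : ℝ → ℝ)
    (hsa : IsSAFunOn (Icc a b) f) :
    ∃ (N : ℕ) (t : Fin (N + 1) → ℝ),
      StrictMono t ∧ t 0 = a ∧ t (Fin.last N) = b ∧
      ∀ l : Fin N,
        ContDiffOn ℝ 1 f (Ioo (t l.castSucc) (t l.succ)) ∧
        ((∀ x ∈ Ioo (t l.castSucc) (t l.succ), ∀ y ∈ Ioo (t l.castSucc) (t l.succ),
            f x = f y) ∨
          StrictMonoOn f (Ioo (t l.castSucc) (t l.succ)) ∨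
          StrictAntiOn f (Ioo (t l.castSucc) (t l.succ))) := by
  obtain ⟨N, t, ht, ht₀, htN, hsub⟩ :=
    exists_strictMono_fin_Ioo_subset_diff (eventually_cofinite.1 hsa.eventually_isTameAt) hab.le
  refine ⟨N, t, ht, ht₀, htN, fun l => ?_⟩
  have htame : ∀ x ∈ Ioo (t l.castSucc) (t l.succ), IsTameAt f x := fun x hx =>
    not_not.1 (hsub l hx).2 (Ioo_subset_Icc_self (hsub l hx).1)
  exact ⟨contDiffOn_of_forall_isTameAt htame,
    const_or_strictMonoOn_or_strictAntiOn_of_forall_isTameAt isOpen_Ioo isPreconnected_Ioo htame⟩
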